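/- (Theorem 1, feasibility.) Assume the Dirichlet-measurement setting described in the context, with θ₁ ∈ (0, π/2]. Assume additionally that sup_{n≥1} |φₙ(0)| < ∞ and Σ_{n≥1} φₙ(0)²/λₙ < ∞. Let K ∈ ℝ^{1×N₀} and L ∈ ℝ^{N₀} be such that every complex eigenvalue μ of F₁ satisfies Re μ < −|c|, and fix α₁, α₂, α₃, α₄ > 0 with 𝔠 := 1 − ½(|c|/α₁ + 1/α₂ + 1/α₃ + |c|/α₄) > 0. Then there exists N₁ ≥ N₀ + 1 such that for every N ≥ N₁ there exist a symmetric positive definite matrix P, symmetric positive semidefinite matrices Q₁, Q₂, and reals r₁, r₂, β, γ > 0 satisfying Ψ ≺ 0, Θ₁ ≺ 0, Θ₂ ≺ 0, Θ₃ < 0, and Θ₄ < 0. -/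

import Mathlib

open Real Set Matrix MeasureTheory

noncomputable section

/-- One-sided/within derivative on the spatial interval `[0,1]`. -/
def dI (f : ℝ → ℝ) (x : ℝ) : ℝ := derivWithin f (Set.Icc 0 1) x

/-- `L²(0,1)` inner product. -/
def ip (f g : ℝ → ℝ) : ℝ := ∫ x in (0:ℝ)..1, f x * g x

/-- The lifting function `a(x) = (2p(x) + 2xp'(x) - x²q̃(x))/(cos θ₂ + 2 sin θ₂)`. -/
def aFun (p qt : ℝ → ℝ) (θ₂ : ℝ) (x : ℝ) : ℝ :=
  (2 * p x + 2 * x * dI p x - x ^ 2 * qt x) / (Real.cos θ₂ + 2 * Real.sin θ₂)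

/-- The lifting function `b(x) = -x²/(cos θ₂ + 2 sin θ₂)`. -/
def bFun (θ₂ : ℝ) (x : ℝ) : ℝ := -x ^ 2 / (Real.cos θ₂ + 2 * Real.sin θ₂)

/-- Input coefficient `βₙ = aₙ + (-λₙ + q_c) bₙ`. -/
def betaC (p qt : ℝ → ℝ) (θ₂ q_c : ℝ) (lam : ℕ → ℝ) (phi : ℕ → ℝ → ℝ) (n : ℕ) : ℝ :=
  ip (aFun p qt θ₂) (phi n) + (-lam n + q_c) * ip (bFun θ₂) (phi n)

/-- Squared `L²`-norm `‖R_N f‖² = Σ_{n≥N+1} ⟨f,φₙ⟩²` of the residual `R_N f`. -/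
def RN2 (f : ℝ → ℝ) (phi : ℕ → ℝ → ℝ) (N : ℕ) : ℝ := ∑' k : ℕ, (ip f (phi (N + 1 + k)))^2

/-- `A₀ = diag(-λ₁+q_c, …, -λ_{N₀}+q_c)`. -/
def A0 (N₀ : ℕ) (lam : ℕ → ℝ) (q_c : ℝ) : Matrix (Fin N₀) (Fin N₀) ℝ :=
  Matrix.diagonal fun i => -lam (i.val + 1) + q_c

/-- `F₃ = A₁ = diag(-λ_{N₀+1}+q_c, …, -λ_N+q_c)`. -/
def A1 (N₀ N : ℕ) (lam : ℕ → ℝ) (q_c : ℝ) : Matrix (Fin (N - N₀)) (Fin (N - N₀)) ℝ :=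
  Matrix.diagonal fun i => -lam (N₀ + i.val + 1) + q_c

/-- `𝔅₀ = (β₁,…,β_{N₀})ᵀ`. -/
def B0 (N₀ : ℕ) (p qt : ℝ → ℝ) (θ₂ q_c : ℝ) (lam : ℕ → ℝ) (phi : ℕ → ℝ → ℝ) :
    Fin N₀ → ℝ :=
  fun i => betaC p qt θ₂ q_c lam phi (i.val + 1)

/-- `F₁ = [[A₀+𝔅₀K, LC₀],[0, A₀-LC₀]]`. -/
def F1 (N₀ : ℕ) (lam : ℕ → ℝ) (q_c : ℝ) (B0v C0v K L : Fin N₀ → ℝ) :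
    Matrix (Fin N₀ ⊕ Fin N₀) (Fin N₀ ⊕ Fin N₀) ℝ :=
  Matrix.fromBlocks (A0 N₀ lam q_c + Matrix.vecMulVec B0v K) (Matrix.vecMulVec L C0v) 0
    (A0 N₀ lam q_c - Matrix.vecMulVec L C0v)

/-- `F₂ = [LC̃₁; -LC̃₁]`. -/
def F2 (N₀ N : ℕ) (L : Fin N₀ → ℝ) (Ct : Fin (N - N₀) → ℝ) :
    Matrix (Fin N₀ ⊕ Fin N₀) (Fin (N - N₀)) ℝ :=
  Matrix.of fun i j => Sum.elim (fun a' => L a' * Ct j) (fun a' => -(L a' * Ct j)) i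

/-- `ℒ = col(L,-L)`. -/
def Lv (N₀ : ℕ) (L : Fin N₀ → ℝ) : Fin N₀ ⊕ Fin N₀ → ℝ := Sum.elim L fun a' => -L a'

/-- `K̃ = [K 0]`. -/
def Kt (N₀ : ℕ) (K : Fin N₀ → ℝ) : Fin N₀ ⊕ Fin N₀ → ℝ := Sum.elim K 0

/-- Index type of the matrix `Ψ` (blocks of sizes `2N₀`, `N-N₀`, `1`). -/
abbrev SIdx (N₀ N : ℕ) := ((Fin N₀ ⊕ Fin N₀) ⊕ Fin (N - N₀)) ⊕ Unit

/-- The row vector `E = K̃ [F₁ F₂ ℒ]`. -/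
def Erow (N₀ N : ℕ) (F1m : Matrix (Fin N₀ ⊕ Fin N₀) (Fin N₀ ⊕ Fin N₀) ℝ)
    (F2m : Matrix (Fin N₀ ⊕ Fin N₀) (Fin (N - N₀)) ℝ)
    (Lvv Ktv : Fin N₀ ⊕ Fin N₀ → ℝ) : SIdx N₀ N → ℝ :=
  Sum.elim (Sum.elim (Matrix.vecMul Ktv F1m) (Matrix.vecMul Ktv F2m)) fun _ => Ktv ⬝ᵥ Lvv

/-- The matrix `Ψ` of the LMI conditions. -/
def PsiM (N₀ N : ℕ)
    (P Q1 F1m : Matrix (Fin N₀ ⊕ Fin N₀) (Fin N₀ ⊕ Fin N₀) ℝ)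
    (Q2 F3m : Matrix (Fin (N - N₀)) (Fin (N - N₀)) ℝ)
    (F2m : Matrix (Fin N₀ ⊕ Fin N₀) (Fin (N - N₀)) ℝ)
    (Lvv Ktv : Fin N₀ ⊕ Fin N₀ → ℝ) (E : SIdx N₀ N → ℝ)
    (c r₁ βs γ α₂ α₃ RNa2 RNb2 : ℝ) : Matrix (SIdx N₀ N) (SIdx N₀ N) ℝ :=
  Matrix.fromBlocks
    (Matrix.fromBlocks
      (F1mᵀ * P + P * F1m + |c| • P + Q1 + (α₂ * γ * RNa2) • Matrix.vecMulVec Ktv Ktv)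
      (P * F2m)
      ((P * F2m)ᵀ)
      (r₁ • ((2:ℝ) • F3m + |c| • (1 : Matrix (Fin (N - N₀)) (Fin (N - N₀)) ℝ)) + Q2))
    (Matrix.of fun i (_ : Unit) => Sum.elim (P.mulVec Lvv) (fun _ => 0) i)
    (Matrix.of fun (_ : Unit) j => Sum.elim (P.mulVec Lvv) (fun _ => 0) j)
    (Matrix.of fun _ _ => -βs)
  + (2 * α₃ * γ * RNb2) • Matrix.vecMulVec E E

/-- The matrix `Θ₁`. -/
def Theta1 (N₀ : ℕ) (P Q1 : Matrix (Fin N₀ ⊕ Fin N₀) (Fin N₀ ⊕ Fin N₀) ℝ)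
    (Ktv : Fin N₀ ⊕ Fin N₀ → ℝ) (c γ α₃ α₄ RNb2 : ℝ) :
    Matrix (Fin N₀ ⊕ Fin N₀) (Fin N₀ ⊕ Fin N₀) ℝ :=
  |c| • P - Q1 + ((2*α₃*|c| + α₄) * γ * |c| * RNb2) • Matrix.vecMulVec Ktv Ktv

/-- The matrix `Θ₂`. -/
def Theta2 (N₀ N : ℕ) (Q2 : Matrix (Fin (N - N₀)) (Fin (N - N₀)) ℝ) (r₁ c : ℝ) :
    Matrix (Fin (N - N₀)) (Fin (N - N₀)) ℝ :=
  (r₁ * |c|) • (1 : Matrix (Fin (N - N₀)) (Fin (N - N₀)) ℝ) - Q2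

/-! ### Lyapunov inequality for Hurwitz matrices -/

theorem isSymm_of_posDef {n : Type*} {P : Matrix n n ℝ} (hP : P.PosDef) : P.IsSymm := by
  have := hP.isHermitian
  rwa [Matrix.IsHermitian, conjTranspose_eq_transpose_of_trivial] at this

section Lyapunov

variable {m n : Type*} [Fintype m] [Fintype n]

theorem dotProduct_sq_le (u v : n → ℝ) : (u ⬝ᵥ v) ^ 2 ≤ (u ⬝ᵥ u) * (v ⬝ᵥ v) := by
  simpa [dotProduct, sq] using Finset.sum_mul_sq_le_sq_mul_sq Finset.univ u v

theorem dotProduct_self_nonneg_real (v : n → ℝ) : 0 ≤ v ⬝ᵥ v :=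
  Finset.sum_nonneg fun i _ => mul_self_nonneg (v i)

theorem dotProduct_self_pos_real {v : n → ℝ} (hv : v ≠ 0) : 0 < v ⬝ᵥ v :=
  lt_of_le_of_ne (dotProduct_self_nonneg_real v) fun h => hv (dotProduct_self_eq_zero.mp h.symm)

theorem mulVec_dotProduct_mulVec_self_le (M : Matrix m n ℝ) (v : n → ℝ) :
    (M *ᵥ v) ⬝ᵥ (M *ᵥ v) ≤ (∑ i, ∑ j, M i j ^ 2) * (v ⬝ᵥ v) := by
  rw [Finset.sum_mul]
  refine Finset.sum_le_sum fun i _ => ?_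
  have h := dotProduct_sq_le (M i) v
  simpa [mulVec, dotProduct, sq] using h

theorem transpose_mul_self_dotProduct (M : Matrix m n ℝ) (v w : n → ℝ) :
    v ⬝ᵥ ((Mᵀ * M) *ᵥ w) = (M *ᵥ v) ⬝ᵥ (M *ᵥ w) := by
  rw [← mulVec_mulVec, dotProduct_mulVec, vecMul_transpose]

theorem dotProduct_mulVec_comm_of_isSymm {P : Matrix n n ℝ} (hP : P.IsSymm) (v w : n → ℝ) :
    v ⬝ᵥ (P *ᵥ w) = w ⬝ᵥ (P *ᵥ v) := by
  rw [dotProduct_mulVec, dotProduct_comm, ← mulVec_transpose, hP.eq]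

attribute [local instance] Matrix.frobeniusNormedRing Matrix.frobeniusNormedAlgebra

theorem sum_sq_eq_frobenius_norm_sq_map [DecidableEq n] (M : Matrix n n ℝ) :
    ∑ i, ∑ j, M i j ^ 2 = ‖M.map (Complex.ofReal : ℝ → ℂ)‖ ^ 2 := by
  rw [Matrix.frobenius_norm_def, ← Real.rpow_natCast, ← Real.rpow_mul (by positivity)]
  simp

theorem exists_norm_pow_lt_one {A : Type*} [NormedRing A] [NormedAlgebra ℂ A] [CompleteSpace A]
    [Nontrivial A] (a : A) (ha : ∀ z ∈ spectrum ℂ a, ‖z‖ < 1) :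
    ∃ k : ℕ, 0 < k ∧ ‖a ^ k‖ < 1 := by
  have hr : spectralRadius ℂ a < (1 : NNReal) :=
    spectrum.spectralRadius_lt_of_forall_lt a fun z hz => by
      rw [← NNReal.coe_lt_coe]; simpa using ha z hz
  have ht := (spectrum.pow_nnnorm_pow_one_div_tendsto_nhds_spectralRadius a).eventually_lt_const hr
  obtain ⟨k, hk, hk0⟩ := (ht.and (Filter.eventually_gt_atTop 0)).exists
  refine ⟨k, hk0, ?_⟩
  by_contra! h
  refine absurd hk (not_lt.mpr ?_)
  have h1 : (1 : ENNReal) ≤ (‖a ^ k‖₊ : ENNReal) := by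
    rw [ENNReal.one_le_coe_iff, ← NNReal.coe_le_coe]; simpa using h
  simpa using ENNReal.one_le_rpow h1 (by positivity : (0 : ℝ) < 1 / k)

variable [DecidableEq n]

theorem exists_sum_sq_pow_lt_one [Nonempty n] (M : Matrix n n ℝ)
    (hM : ∀ z ∈ spectrum ℂ (M.map (Complex.ofReal : ℝ → ℂ)), ‖z‖ < 1) :
    ∃ k : ℕ, 0 < k ∧ ∑ i, ∑ j, (M ^ k) i j ^ 2 < 1 := by
  obtain ⟨k, hk0, hk⟩ := exists_norm_pow_lt_one _ hM
  refine ⟨k, hk0, ?_⟩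
  have hpow : (M ^ k).map (Complex.ofReal : ℝ → ℂ) = M.map (Complex.ofReal : ℝ → ℂ) ^ k :=
    map_pow (Complex.ofRealHom.mapMatrix : Matrix n n ℝ →+* Matrix n n ℂ) M k
  rw [sum_sq_eq_frobenius_norm_sq_map, hpow]
  exact pow_lt_one₀ (norm_nonneg _) hk two_ne_zero

theorem isUnit_sub_one_of_spectrum_re_neg (B : Matrix n n ℝ)
    (hB : ∀ z ∈ spectrum ℂ (B.map (Complex.ofReal : ℝ → ℂ)), z.re < 0) : IsUnit (B - 1) := by
  have h1 : (1 : ℂ) ∉ spectrum ℂ (B.map (Complex.ofReal : ℝ → ℂ)) := fun h => by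
    have := hB 1 h
    norm_num at this
  rw [spectrum.notMem_iff, Matrix.isUnit_iff_isUnit_det, isUnit_iff_ne_zero] at h1
  rw [← IsUnit.neg_iff, neg_sub, Matrix.isUnit_iff_isUnit_det, isUnit_iff_ne_zero]
  intro h0
  refine h1 ?_
  have hmap : algebraMap ℂ (Matrix n n ℂ) 1 - B.map (Complex.ofReal : ℝ → ℂ)
      = (Complex.ofRealHom.mapMatrix : Matrix n n ℝ →+* Matrix n n ℂ) (1 - B) := by
    rw [map_sub, map_one, map_one]; rfl
  rw [hmap, ← RingHom.map_det, h0, map_zero]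

/-- The Cayley transform maps the open left half-plane into the open unit disc. -/
theorem norm_lt_one_of_mem_spectrum_cayley (B : Matrix n n ℂ) (D : (Matrix n n ℂ)ˣ)
    (hB : ∀ z ∈ spectrum ℂ B, z.re < 0) (hD : (D : Matrix n n ℂ) = B - 1)
    (z : ℂ) (hz : z ∈ spectrum ℂ ((B + 1) * (↑D⁻¹ : Matrix n n ℂ))) : ‖z‖ < 1 := by
  by_contra! h
  refine hz ?_
  have key : algebraMap ℂ (Matrix n n ℂ) z - (B + 1) * (↑D⁻¹ : Matrix n n ℂ)
      = (z • (B - 1) - (B + 1)) * (↑D⁻¹ : Matrix n n ℂ) := by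
    rw [sub_mul, smul_mul_assoc, ← hD, Units.mul_inv, Algebra.algebraMap_eq_smul_one]
  rw [spectrum.mem_resolventSet_iff, key]
  refine IsUnit.mul ?_ (Units.isUnit _)
  by_cases h1 : z = 1
  · have : z • (B - 1) - (B + 1) = algebraMap ℂ (Matrix n n ℂ) (-2) := by
      rw [h1, Algebra.algebraMap_eq_smul_one]
      module
    rw [this]
    exact (isUnit_iff_ne_zero.mpr (by norm_num : (-2 : ℂ) ≠ 0)).map _
  · have hz1 : z - 1 ≠ 0 := sub_ne_zero.mpr h1
    have hfac : z • (B - 1) - (B + 1)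
        = algebraMap ℂ (Matrix n n ℂ) (-(z - 1))
          * (algebraMap ℂ (Matrix n n ℂ) ((z + 1) / (z - 1)) - B) := by
      simp only [Algebra.algebraMap_eq_smul_one, smul_mul_assoc, one_mul, smul_sub, smul_smul]
      rw [show -(z - 1) * ((z + 1) / (z - 1)) = -(z + 1) by field_simp]
      module
    rw [hfac]
    refine ((isUnit_iff_ne_zero.mpr (neg_ne_zero.mpr hz1)).map _).mul ?_
    rw [← spectrum.notMem_iff]
    intro hmem
    refine absurd (hB _ hmem) (not_lt.mpr ?_)
    rw [Complex.div_re, ← add_div]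
    refine div_nonneg ?_ (Complex.normSq_nonneg _)
    have hn : 1 ≤ z.re * z.re + z.im * z.im := by
      rw [← Complex.normSq_apply, Complex.normSq_eq_norm_sq]
      nlinarith
    simp only [Complex.add_re, Complex.sub_re, Complex.add_im, Complex.sub_im, Complex.one_re,
      Complex.one_im]
    nlinarith

/-- A discrete Lyapunov matrix for `M`, obtained by summing the first powers of `M`. -/
theorem exists_posDef_stein (M : Matrix n n ℝ) {k : ℕ} (hk : 0 < k) :
    ∃ P : Matrix n n ℝ, P.PosDef ∧ ∀ v,
      v ⬝ᵥ (P *ᵥ v) - (M *ᵥ v) ⬝ᵥ (P *ᵥ (M *ᵥ v))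
        = v ⬝ᵥ v - (M ^ k *ᵥ v) ⬝ᵥ (M ^ k *ᵥ v) := by
  have hq : ∀ v, v ⬝ᵥ ((∑ j ∈ Finset.range k, (M ^ j)ᵀ * M ^ j) *ᵥ v)
      = ∑ j ∈ Finset.range k, (M ^ j *ᵥ v) ⬝ᵥ (M ^ j *ᵥ v) := fun v => by
    rw [Matrix.sum_mulVec, dotProduct_sum]
    exact Finset.sum_congr rfl fun j _ => transpose_mul_self_dotProduct _ _ _
  refine ⟨∑ j ∈ Finset.range k, (M ^ j)ᵀ * M ^ j, ?_, fun v => ?_⟩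
  · refine PosDef.of_dotProduct_mulVec_pos ?_ fun v hv => ?_
    · simp [Matrix.IsHermitian, conjTranspose_eq_transpose_of_trivial, transpose_sum]
    · rw [star_trivial, hq]
      refine Finset.sum_pos' (fun j _ => dotProduct_self_nonneg_real _)
        ⟨0, Finset.mem_range.mpr hk, ?_⟩
      simpa using dotProduct_self_pos_real hv
  · rw [hq, hq, ← Finset.sum_sub_distrib]
    have := Finset.sum_range_sub' (fun j => (M ^ j *ᵥ v) ⬝ᵥ (M ^ j *ᵥ v)) k
    simpa [mulVec_mulVec, ← pow_succ] using this

theorem exists_posDef_of_spectrum_re_neg [Nonempty n] (B : Matrix n n ℝ)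
    (hB : ∀ z ∈ spectrum ℂ (B.map (Complex.ofReal : ℝ → ℂ)), z.re < 0) :
    ∃ P : Matrix n n ℝ, P.PosDef ∧ ∃ δ > 0, ∀ v, v ⬝ᵥ (P *ᵥ (B *ᵥ v)) ≤ -δ * (v ⬝ᵥ v) := by
  obtain ⟨D, hD⟩ := isUnit_sub_one_of_spectrum_re_neg B hB
  set f : Matrix n n ℝ →+* Matrix n n ℂ := Complex.ofRealHom.mapMatrix
  set M : Matrix n n ℝ := (B + 1) * (↑D⁻¹ : Matrix n n ℝ) with hM
  have hMspec : ∀ z ∈ spectrum ℂ (M.map (Complex.ofReal : ℝ → ℂ)), ‖z‖ < 1 := fun z hz => by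
    refine norm_lt_one_of_mem_spectrum_cayley (f B) (Units.map f.toMonoidHom D) hB ?_ z ?_
    · simp [hD]
    · have : M.map (Complex.ofReal : ℝ → ℂ) = f M := rfl
      rw [this, hM, map_mul, map_add, map_one] at hz
      exact hz
  obtain ⟨k, hk, hlt⟩ := exists_sum_sq_pow_lt_one M hMspec
  obtain ⟨P, hP, hPM⟩ := exists_posDef_stein M hk
  have hsymm : P.IsSymm := isSymm_of_posDef hP
  set s := ∑ i, ∑ j, (M ^ k) i j ^ 2
  set d := ∑ i, ∑ j, (↑D⁻¹ : Matrix n n ℝ) i j ^ 2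
  have hd : 0 ≤ d := Finset.sum_nonneg fun i _ => Finset.sum_nonneg fun j _ => sq_nonneg _
  refine ⟨P, hP, (1 - s) / (4 * (d + 1)), div_pos (by linarith) (by positivity), fun v => ?_⟩
  have hv : (↑D⁻¹ : Matrix n n ℝ) *ᵥ ((B - 1) *ᵥ v) = v := by
    rw [← hD, mulVec_mulVec, Units.inv_mul, one_mulVec]
  have h1 := hPM ((B - 1) *ᵥ v)
  have h2 := mulVec_dotProduct_mulVec_self_le (M ^ k) ((B - 1) *ᵥ v)
  have h3 := mulVec_dotProduct_mulVec_self_le (↑D⁻¹ : Matrix n n ℝ) ((B - 1) *ᵥ v)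
  have hnn := dotProduct_self_nonneg_real ((B - 1) *ᵥ v)
  have hMv : M *ᵥ ((B - 1) *ᵥ v) = B *ᵥ v + v := by
    rw [hM, ← mulVec_mulVec, hv, add_mulVec, one_mulVec]
  rw [hv] at h3
  have h4 : ((B - 1) *ᵥ v) ⬝ᵥ (P *ᵥ ((B - 1) *ᵥ v))
      - (M *ᵥ ((B - 1) *ᵥ v)) ⬝ᵥ (P *ᵥ (M *ᵥ ((B - 1) *ᵥ v)))
      = -4 * (v ⬝ᵥ (P *ᵥ (B *ᵥ v))) := by
    rw [hMv, sub_mulVec, one_mulVec]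
    simp only [mulVec_add, mulVec_sub, add_dotProduct, sub_dotProduct, dotProduct_add,
      dotProduct_sub]
    rw [dotProduct_mulVec_comm_of_isSymm hsymm (B *ᵥ v) v]
    ring
  set t := ((B - 1) *ᵥ v) ⬝ᵥ ((B - 1) *ᵥ v)
  have h5 : (1 - s) * t ≤ -4 * (v ⬝ᵥ (P *ᵥ (B *ᵥ v))) := by linarith
  have h6 : v ⬝ᵥ v ≤ (d + 1) * t := by linarith
  have h7 : (1 - s) / (4 * (d + 1)) * (v ⬝ᵥ v) ≤ (1 - s) / 4 * t := by
    rw [div_mul_eq_mul_div, div_le_iff₀ (by positivity)]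
    nlinarith
  linarith

theorem exists_posDef_of_spectrum_re_lt [Nonempty n] (A : Matrix n n ℝ) (σ : ℝ)
    (hA : ∀ z ∈ spectrum ℂ (A.map (Complex.ofReal : ℝ → ℂ)), z.re < -σ) :
    ∃ P : Matrix n n ℝ, P.PosDef ∧ ∃ δ > 0, ∀ v,
      v ⬝ᵥ (P *ᵥ (A *ᵥ v)) + σ * (v ⬝ᵥ (P *ᵥ v)) ≤ -δ * (v ⬝ᵥ v) := by
  obtain ⟨P, hP, δ, hδ, h⟩ := exists_posDef_of_spectrum_re_neg (A + σ • (1 : Matrix n n ℝ))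
    fun z hz => by
      have hmap : (A + σ • (1 : Matrix n n ℝ)).map (Complex.ofReal : ℝ → ℂ)
          = algebraMap ℂ (Matrix n n ℂ) σ + A.map (Complex.ofReal : ℝ → ℂ) := by
        ext i j
        by_cases hij : i = j <;> simp [Matrix.algebraMap_matrix_apply, hij, add_comm]
      rw [hmap, ← sub_add_cancel z (σ : ℂ)] at hz
      have := hA _ (spectrum.add_mem_add_iff.mp hz)
      rw [Complex.sub_re, Complex.ofReal_re] at this
      linarith
  refine ⟨P, hP, δ, hδ, fun v => ?_⟩
  have := h v
  rwa [add_mulVec, smul_mulVec, one_mulVec, mulVec_add, mulVec_smul, dotProduct_add,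
    dotProduct_smul, smul_eq_mul] at this

end Lyapunov

/-! ### Quadratic form of `Ψ` -/

theorem PsiM_isSymm {N₀ N : ℕ}
    {P Q1 : Matrix (Fin N₀ ⊕ Fin N₀) (Fin N₀ ⊕ Fin N₀) ℝ}
    {Q2 F3m : Matrix (Fin (N - N₀)) (Fin (N - N₀)) ℝ}
    (hP : P.IsSymm) (hQ1 : Q1.IsSymm) (hQ2 : Q2.IsSymm) (hF3 : F3m.IsSymm)
    (F1m : Matrix (Fin N₀ ⊕ Fin N₀) (Fin N₀ ⊕ Fin N₀) ℝ)
    (F2m : Matrix (Fin N₀ ⊕ Fin N₀) (Fin (N - N₀)) ℝ)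
    (l k : Fin N₀ ⊕ Fin N₀ → ℝ) (E : SIdx N₀ N → ℝ) (c r₁ βs γ α₂ α₃ a b : ℝ) :
    (PsiM N₀ N P Q1 F1m Q2 F3m F2m l k E c r₁ βs γ α₂ α₃ a b).IsSymm := by
  unfold PsiM
  refine IsSymm.add (IsSymm.fromBlocks (IsSymm.fromBlocks ?_ rfl ?_) rfl rfl) ?_
  · simp only [IsSymm, transpose_add, transpose_mul, transpose_smul, transpose_transpose,
      transpose_vecMulVec, hP.eq, hQ1.eq]
    abel
  · simp [IsSymm, hQ2.eq, hF3.eq]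
  · simp [IsSymm, transpose_vecMulVec]

theorem dotProduct_vecMulVec_mulVec_self {n : Type*} [Fintype n] (u v : n → ℝ) :
    v ⬝ᵥ (vecMulVec u u *ᵥ v) = (u ⬝ᵥ v) ^ 2 := by
  rw [vecMulVec_mulVec, op_smul_eq_smul, dotProduct_smul, smul_eq_mul, dotProduct_comm v u, sq]

theorem PsiM_quadForm {N₀ N : ℕ}
    {P : Matrix (Fin N₀ ⊕ Fin N₀) (Fin N₀ ⊕ Fin N₀) ℝ} (hP : P.IsSymm)
    (Q1 F1m : Matrix (Fin N₀ ⊕ Fin N₀) (Fin N₀ ⊕ Fin N₀) ℝ)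
    (Q2 F3m : Matrix (Fin (N - N₀)) (Fin (N - N₀)) ℝ)
    (F2m : Matrix (Fin N₀ ⊕ Fin N₀) (Fin (N - N₀)) ℝ)
    (l k : Fin N₀ ⊕ Fin N₀ → ℝ) (c r₁ βs γ α₂ α₃ a b : ℝ)
    (x : Fin N₀ ⊕ Fin N₀ → ℝ) (y : Fin (N - N₀) → ℝ) (w : ℝ) :
    Sum.elim (Sum.elim x y) (fun _ => w) ⬝ᵥ
      (PsiM N₀ N P Q1 F1m Q2 F3m F2m l k (Erow N₀ N F1m F2m l k) c r₁ βs γ α₂ α₃ a b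
        *ᵥ Sum.elim (Sum.elim x y) (fun _ => w))
    = 2 * (x ⬝ᵥ (P *ᵥ (F1m *ᵥ x))) + |c| * (x ⬝ᵥ (P *ᵥ x)) + x ⬝ᵥ (Q1 *ᵥ x)
      + α₂ * γ * a * (k ⬝ᵥ x) ^ 2
      + 2 * (x ⬝ᵥ (P *ᵥ (F2m *ᵥ y)))
      + r₁ * (2 * (y ⬝ᵥ (F3m *ᵥ y)) + |c| * (y ⬝ᵥ y)) + y ⬝ᵥ (Q2 *ᵥ y)
      + 2 * w * ((P *ᵥ l) ⬝ᵥ x) - βs * w ^ 2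
      + 2 * α₃ * γ * b * (k ⬝ᵥ (F1m *ᵥ x) + k ⬝ᵥ (F2m *ᵥ y) + (k ⬝ᵥ l) * w) ^ 2 := by
  have hcol : (Matrix.of fun i (_ : Unit) => Sum.elim (P *ᵥ l) (fun _ : Fin (N - N₀) => (0 : ℝ)) i)
      *ᵥ (fun _ => w) = w • Sum.elim (P *ᵥ l) (fun _ => 0) := by
    ext i; simp [mulVec, dotProduct, mul_comm]
  have hrow : (Matrix.of fun (_ : Unit) j => Sum.elim (P *ᵥ l) (fun _ : Fin (N - N₀) => (0 : ℝ)) j)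
      *ᵥ Sum.elim x y = fun _ => (P *ᵥ l) ⬝ᵥ x := by
    ext i
    change Sum.elim (P *ᵥ l) (fun _ => 0) ⬝ᵥ Sum.elim x y = _
    rw [sumElim_dotProduct_sumElim, show (fun _ : Fin (N - N₀) => (0 : ℝ)) = 0 from rfl,
      zero_dotProduct, add_zero]
  have hcorner : (Matrix.of fun (_ _ : Unit) => -βs) *ᵥ (fun _ => w) = fun _ => -βs * w := by
    ext i; simp [mulVec, dotProduct]
  have hE : Erow N₀ N F1m F2m l k ⬝ᵥ Sum.elim (Sum.elim x y) (fun _ => w)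
      = k ⬝ᵥ (F1m *ᵥ x) + k ⬝ᵥ (F2m *ᵥ y) + (k ⬝ᵥ l) * w := by
    unfold Erow
    rw [sumElim_dotProduct_sumElim, sumElim_dotProduct_sumElim, dotProduct_mulVec,
      dotProduct_mulVec]
    simp [dotProduct]
  have hF1 : x ⬝ᵥ ((F1mᵀ * P) *ᵥ x) = x ⬝ᵥ (P *ᵥ (F1m *ᵥ x)) := by
    rw [← mulVec_mulVec, dotProduct_mulVec, vecMul_transpose,
      dotProduct_mulVec_comm_of_isSymm hP]
  have hF2 : y ⬝ᵥ ((P * F2m)ᵀ *ᵥ x) = x ⬝ᵥ (P *ᵥ (F2m *ᵥ y)) := by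
    rw [mulVec_transpose, dotProduct_comm, ← dotProduct_mulVec, mulVec_mulVec]
  unfold PsiM
  rw [add_mulVec, dotProduct_add, smul_mulVec, dotProduct_smul, dotProduct_vecMulVec_mulVec_self,
    hE, fromBlocks_mulVec]
  simp only [Sum.elim_comp_inl, Sum.elim_comp_inr, sumElim_dotProduct_sumElim, dotProduct_add]
  rw [fromBlocks_mulVec, hcol, hrow, hcorner]
  simp only [Sum.elim_comp_inl, Sum.elim_comp_inr, sumElim_dotProduct_sumElim, dotProduct_add,
    add_mulVec, smul_mulVec, dotProduct_smul, smul_eq_mul, one_mulVec, hF1, hF2,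
    dotProduct_vecMulVec_mulVec_self]
  rw [show (fun _ : Fin (N - N₀) => (0 : ℝ)) = 0 from rfl, dotProduct_zero,
    dotProduct_comm x (P *ᵥ l), ← mulVec_mulVec, ← mulVec_mulVec]
  simp only [dotProduct, Finset.univ_unique, Finset.sum_const, Finset.card_singleton, one_smul]
  ring

theorem F2_mulVec {N₀ N : ℕ} (L : Fin N₀ → ℝ) (Ct y : Fin (N - N₀) → ℝ) :
    F2 N₀ N L Ct *ᵥ y = (Ct ⬝ᵥ y) • Lv N₀ L := by
  ext i
  rcases i with i | i <;>
    simp [F2, Lv, mulVec, dotProduct, Finset.mul_sum, mul_comm, mul_left_comm]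

/-! ### Tails of series -/

theorem tsum_shift_le {f : ℕ → ℝ} (hf : ∀ k, 0 ≤ f k) (hs : Summable f) (N : ℕ) :
    ∑' k, f (k + N) ≤ ∑' k, f k :=
  tsum_comp_le_tsum_of_inj hs hf (add_left_injective N)

theorem RN2_nonneg (f : ℝ → ℝ) (phi : ℕ → ℝ → ℝ) (N : ℕ) : 0 ≤ RN2 f phi N :=
  tsum_nonneg fun _ => sq_nonneg _

theorem RN2_le_RN2_zero (f : ℝ → ℝ) (phi : ℕ → ℝ → ℝ) (N : ℕ) : RN2 f phi N ≤ RN2 f phi 0 := by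
  have h : ∀ M, RN2 f phi M = ∑' k, (fun k => ip f (phi (k + 1)) ^ 2) (k + M) := fun M =>
    tsum_congr fun k => by
      change _ = ip f (phi (k + M + 1)) ^ 2
      rw [show M + 1 + k = k + M + 1 by ring]
  rw [h, h]
  by_cases hs : Summable fun k => ip f (phi (k + 1)) ^ 2
  · exact tsum_shift_le (fun _ => sq_nonneg _) hs N
  · rw [tsum_eq_zero_of_not_summable (mt (summable_nat_add_iff N).mp hs),
      tsum_eq_zero_of_not_summable (mt (summable_nat_add_iff 0).mp hs)]

/-! ### Negativity of the constraints -/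

theorem two_mul_le_young {t : ℝ} (ht : 0 < t) (u v : ℝ) : 2 * u * v ≤ u ^ 2 / t + t * v ^ 2 := by
  have h : u ^ 2 / t + t * v ^ 2 - 2 * u * v = (u - t * v) ^ 2 / t := by
    field_simp
    ring
  have : 0 ≤ (u - t * v) ^ 2 / t := by positivity
  linarith

/-- Scalar estimate behind `Ψ ≺ 0`: here `X`, `Y` stand for the squared norms of the first two
components, and `s`, `s'`, `r`, `u`, `v`, `f`, `g` for the forms evaluated at them. -/
theorem quadForm_scalar_bound
    {X Y w s s' r u v f g e e₁ κ C r₁ βs γ α₂ α₃ a b δ η m t : ℝ}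
    (hX : 0 ≤ X) (hY : 0 ≤ Y) (hpos : 0 < X + Y + w ^ 2) (hδ : 0 < δ) (hr₁ : 0 < r₁)
    (hm : 0 ≤ m) (ht : 0 < t) (hr₁η : t * m + 3 ≤ r₁ * η) (hβ : t + 2 ≤ βs)
    (hα₃ : 0 ≤ α₃ * γ * b) (ha : α₂ * γ * a * κ ≤ δ / 4) (hb : 6 * α₃ * γ * b * e₁ ≤ δ / 4)
    (hbm : 6 * α₃ * γ * b * (e ^ 2 * (m + 1)) ≤ 1) (ha₀ : 0 ≤ α₂ * γ * a)
    (hr : r ≤ -(η + C) * Y) (hs : s + C * s' ≤ -(2 * δ) * X) (hu : u ^ 2 / t ≤ δ * X)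
    (hv : v ^ 2 ≤ m * Y) (hg : g ^ 2 ≤ κ * X) (hf : f ^ 2 ≤ e₁ * X) :
    2 * s + C * s' + (C * s' + δ * X) + α₂ * γ * a * g ^ 2 + 2 * (v * u)
      + r₁ * (2 * r + C * Y) + (r₁ * C + 1) * Y + 2 * w * u - βs * w ^ 2
      + 2 * α₃ * γ * b * (f + v * e + e * w) ^ 2 < 0 := by
  have huv := two_mul_le_young ht u v
  have huw := two_mul_le_young ht u w
  have htv : t * v ^ 2 ≤ t * (m * Y) := mul_le_mul_of_nonneg_left hv ht.le
  have hgX : α₂ * γ * a * g ^ 2 ≤ δ / 4 * X := by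
    linarith [mul_le_mul_of_nonneg_left hg ha₀, mul_le_mul_of_nonneg_right ha hX]
  have h3 : (f + v * e + e * w) ^ 2 ≤ 3 * (e₁ * X + e ^ 2 * (m * Y) + e ^ 2 * w ^ 2) := by
    linarith [sq_nonneg (f - v * e), sq_nonneg (f - e * w), sq_nonneg (v * e - e * w),
      mul_le_mul_of_nonneg_left hv (sq_nonneg e)]
  have hE := mul_le_mul_of_nonneg_left h3 hα₃
  have hE1 := mul_le_mul_of_nonneg_right hb hX
  have hE2 : 6 * (α₃ * γ * b) * (e ^ 2 * (m * Y) + e ^ 2 * w ^ 2) ≤ Y + w ^ 2 := by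
    have h0 : 0 ≤ 6 * (α₃ * γ * b) * e ^ 2 := by positivity
    have h0m : 0 ≤ 6 * (α₃ * γ * b) * e ^ 2 * m := by positivity
    have h1 : 6 * (α₃ * γ * b) * e ^ 2 * m ≤ 1 := by linarith
    have h2 : 6 * (α₃ * γ * b) * e ^ 2 ≤ 1 := by linarith
    linarith [mul_le_mul_of_nonneg_right h1 hY, mul_le_mul_of_nonneg_right h2 (sq_nonneg w)]
  have hrY := mul_le_mul_of_nonneg_left hr hr₁.le
  have hηY := mul_le_mul_of_nonneg_right hr₁η hY
  have hβw := mul_le_mul_of_nonneg_right hβ (sq_nonneg w)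
  have htmY : 0 ≤ t * m * Y := by positivity
  have hfin : -(δ / 2) * X - Y - w ^ 2 < 0 := by
    rcases hX.lt_or_eq with h | h
    · linarith [mul_pos hδ h, sq_nonneg w]
    · rw [← h] at hpos ⊢
      linarith
  linarith [sq_nonneg w, mul_nonneg hδ.le hX]

theorem posDef_neg_of_isSymm {n : Type*} [Fintype n] {M : Matrix n n ℝ} (hM : M.IsSymm)
    (h : ∀ v, v ≠ 0 → v ⬝ᵥ (M *ᵥ v) < 0) : (-M).PosDef := by
  refine PosDef.of_dotProduct_mulVec_pos ?_ fun v hv => ?_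
  · rw [Matrix.IsHermitian, conjTranspose_eq_transpose_of_trivial, transpose_neg, hM.eq]
  · rw [star_trivial, neg_mulVec, dotProduct_neg]
    exact neg_pos.mpr (h v hv)

/-- `Ψ ≺ 0` once `r₁` and `β` dominate the cross terms and `γ` is small. -/
theorem posDef_neg_PsiM {N₀ N : ℕ} {P F1m : Matrix (Fin N₀ ⊕ Fin N₀) (Fin N₀ ⊕ Fin N₀) ℝ}
    (hP : P.PosDef) {F3d : Fin (N - N₀) → ℝ} {L : Fin N₀ → ℝ} {Ct : Fin (N - N₀) → ℝ}
    {k : Fin N₀ ⊕ Fin N₀ → ℝ} {c r₁ βs γ α₂ α₃ a b δ η m t : ℝ}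
    (hδ : 0 < δ)
    (hF1 : ∀ v, v ⬝ᵥ (P *ᵥ (F1m *ᵥ v)) + |c| * (v ⬝ᵥ (P *ᵥ v)) ≤ -(2 * δ) * (v ⬝ᵥ v))
    (hF3 : ∀ i, F3d i ≤ -(η + |c|)) (hr₁ : 0 < r₁) (hCt : Ct ⬝ᵥ Ct ≤ m) (ht : 0 < t)
    (htδ : (P *ᵥ Lv N₀ L) ⬝ᵥ (P *ᵥ Lv N₀ L) ≤ t * δ)
    (hr₁η : t * m + 3 ≤ r₁ * η) (hβ : t + 2 ≤ βs)
    (hα₃ : 0 ≤ α₃ * γ * b)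
    (ha : α₂ * γ * a * (k ⬝ᵥ k) ≤ δ / 4)
    (hb : 6 * α₃ * γ * b * ((k ᵥ* F1m) ⬝ᵥ (k ᵥ* F1m)) ≤ δ / 4)
    (hbm : 6 * α₃ * γ * b * ((k ⬝ᵥ Lv N₀ L) ^ 2 * (m + 1)) ≤ 1)
    (ha₀ : 0 ≤ α₂ * γ * a) :
    (-(PsiM N₀ N P (|c| • P + δ • 1) F1m ((r₁ * |c| + 1) • 1) (diagonal F3d) (F2 N₀ N L Ct)
      (Lv N₀ L) k (Erow N₀ N F1m (F2 N₀ N L Ct) (Lv N₀ L) k)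
      c r₁ βs γ α₂ α₃ a b)).PosDef := by
  have hPs := isSymm_of_posDef hP
  refine posDef_neg_of_isSymm (PsiM_isSymm hPs ?_ ?_ (isSymm_diagonal _) ..) fun z hz => ?_
  · simp [IsSymm, hPs.eq]
  · simp [IsSymm]
  obtain ⟨x, y, w, rfl⟩ : ∃ x y w, z = Sum.elim (Sum.elim x y) (fun _ => w) :=
    ⟨fun i => z (.inl (.inl i)), fun i => z (.inl (.inr i)), z (.inr ()), by
      ext i; rcases i with (i | i) | i <;> rfl⟩
  rw [PsiM_quadForm hPs, F2_mulVec]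
  simp only [mulVec_smul, dotProduct_smul, smul_eq_mul, add_mulVec, smul_mulVec, one_mulVec,
    dotProduct_add]
  rw [dotProduct_comm x (P *ᵥ Lv N₀ L), dotProduct_mulVec k F1m x]
  have hm : 0 ≤ m := (dotProduct_self_nonneg_real Ct).trans hCt
  have hX := dotProduct_self_nonneg_real x
  have hY := dotProduct_self_nonneg_real y
  have hpos : 0 < x ⬝ᵥ x + y ⬝ᵥ y + w ^ 2 := by
    by_contra! h
    refine hz ?_
    have hw : w = 0 := pow_eq_zero_iff two_ne_zero |>.mp (by nlinarith [sq_nonneg w])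
    have hx : x = 0 := dotProduct_self_eq_zero.mp (by nlinarith [sq_nonneg w])
    have hy : y = 0 := dotProduct_self_eq_zero.mp (by nlinarith [sq_nonneg w])
    subst hw hx hy
    ext i; rcases i with (i | i) | i <;> rfl
  have hy3 : y ⬝ᵥ (diagonal F3d *ᵥ y) ≤ -(η + |c|) * (y ⬝ᵥ y) := by
    simp only [dotProduct, mulVec_diagonal, Finset.mul_sum]
    exact Finset.sum_le_sum fun i _ => by nlinarith [hF3 i, mul_self_nonneg (y i)]
  have hx := hF1 x
  have hu : ((P *ᵥ Lv N₀ L) ⬝ᵥ x) ^ 2 / t ≤ δ * (x ⬝ᵥ x) := by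
    rw [div_le_iff₀ ht]
    nlinarith [dotProduct_sq_le (P *ᵥ Lv N₀ L) x]
  have hv : (Ct ⬝ᵥ y) ^ 2 ≤ m * (y ⬝ᵥ y) := by nlinarith [dotProduct_sq_le Ct y]
  have hk := dotProduct_sq_le k x
  have he := dotProduct_sq_le (k ᵥ* F1m) x
  generalize (P *ᵥ Lv N₀ L) ⬝ᵥ x = u at *
  generalize Ct ⬝ᵥ y = v at *
  generalize k ⬝ᵥ Lv N₀ L = e at *
  generalize (k ᵥ* F1m) ⬝ᵥ x = f at *
  generalize (k ᵥ* F1m) ⬝ᵥ (k ᵥ* F1m) = e₁ at *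
  generalize k ⬝ᵥ x = g at *
  generalize k ⬝ᵥ k = κ at *
  generalize x ⬝ᵥ x = X at *
  generalize y ⬝ᵥ y = Y at *
  generalize x ⬝ᵥ (P *ᵥ (F1m *ᵥ x)) = s at *
  generalize x ⬝ᵥ (P *ᵥ x) = s' at *
  generalize y ⬝ᵥ (diagonal F3d *ᵥ y) = r at *
  exact quadForm_scalar_bound hX hY hpos hδ hr₁ hm ht hr₁η hβ hα₃ ha hb hbm ha₀ hy3 hx hu hv hk he

theorem posDef_neg_Theta1 {N₀ : ℕ} {P : Matrix (Fin N₀ ⊕ Fin N₀) (Fin N₀ ⊕ Fin N₀) ℝ}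
    (k : Fin N₀ ⊕ Fin N₀ → ℝ) {c γ α₃ α₄ b δ : ℝ} (hδ : 0 < δ)
    (h₀ : 0 ≤ (2 * α₃ * |c| + α₄) * γ * |c| * b)
    (h : (2 * α₃ * |c| + α₄) * γ * |c| * b * (k ⬝ᵥ k) ≤ δ / 2) :
    (-(Theta1 N₀ P (|c| • P + δ • 1) k c γ α₃ α₄ b)).PosDef := by
  unfold Theta1
  rw [sub_add_cancel_left]
  refine posDef_neg_of_isSymm ?_ fun v hv => ?_
  · simp [IsSymm, transpose_vecMulVec]
  · rw [add_mulVec, dotProduct_add, neg_mulVec, smul_mulVec, smul_mulVec, one_mulVec,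
      dotProduct_neg, dotProduct_smul, dotProduct_smul, dotProduct_vecMulVec_mulVec_self,
      smul_eq_mul, smul_eq_mul]
    have hX := dotProduct_self_pos_real hv
    nlinarith [mul_le_mul_of_nonneg_left (dotProduct_sq_le k v) h₀,
      mul_le_mul_of_nonneg_right h hX.le, mul_pos hδ hX]

theorem exists_pos_mul_le {g ε : ℝ} (hg : 0 ≤ g) (hε : 0 < ε) : ∃ γ > 0, γ * g ≤ ε :=
  ⟨ε / (g + 1), by positivity, by
    rw [div_mul_eq_mul_div, div_le_iff₀ (by positivity)]
    nlinarith⟩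

theorem sum_fin_shift_le_tsum {f : ℕ → ℝ} (hf : ∀ k, 0 ≤ f k) (hs : Summable f) (m n : ℕ) :
    ∑ i : Fin n, f (m + i) ≤ ∑' k, f k := by
  have h := tsum_comp_le_tsum_of_inj hs hf (i := fun i : Fin n => m + (i : ℕ))
    fun i j hij => Fin.ext (Nat.add_left_cancel hij)
  rwa [tsum_fintype] at h

theorem eventually_Theta4_neg {lam : ℕ → ℝ} (hlam : Filter.Tendsto lam Filter.atTop Filter.atTop)
    {γ cf βs r₂ : ℝ} (hγ : 0 < γ) (hcf : 0 < cf) (hr₂ : 0 ≤ r₂) (q_c S : ℝ) :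
    ∃ N₁ : ℕ, ∀ N ≥ N₁,
      2 * γ * (-cf * lam (N + 1) + q_c) + βs * S + r₂ / lam (N + 1) < 0 := by
  have hev := (hlam.comp (Filter.tendsto_add_atTop_nat 1)).eventually_ge_atTop
    (max 1 ((2 * γ * q_c + βs * S + r₂ + 1) / (2 * γ * cf)))
  obtain ⟨N₁, hN₁⟩ := Filter.eventually_atTop.mp hev
  refine ⟨N₁, fun N hN => ?_⟩
  have h := hN₁ N hN
  simp only [Function.comp_apply] at h
  have h1 := (le_max_left _ _).trans h
  have h2 := (le_max_right _ _).trans h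
  rw [div_le_iff₀ (by positivity)] at h2
  have h3 : r₂ / lam (N + 1) ≤ r₂ := div_le_self hr₂ h1
  linarith

/-- Theorem 1 (feasibility), Dirichlet measurement: with gains `K`, `L` placing all
eigenvalues of `F₁` in `{Re μ < -|c|}` and Young parameters with `𝔠 > 0`, the constraints
`Ψ ≺ 0`, `Θ₁ ≺ 0`, `Θ₂ ≺ 0`, `Θ₃ < 0`, `Θ₄ < 0` are feasible for all `N` large enough. -/
theorem stmt_16
    (θ₁ θ₂ : ℝ) (hθ₁ : θ₁ ∈ Set.Ioc 0 (π/2)) (hθ₂ : θ₂ ∈ Set.Icc 0 (π/2))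
    (p q qt : ℝ → ℝ) (q_c c : ℝ) (hc : c ≠ 0)
    (hp : ContDiffOn ℝ 2 p (Set.Icc 0 1)) (hppos : ∀ x ∈ Set.Icc (0:ℝ) 1, 0 < p x)
    (hqc : ContinuousOn q (Set.Icc 0 1)) (hqpos : ∀ x ∈ Set.Icc (0:ℝ) 1, 0 < q x)
    (hqt : ∀ x, qt x = q x - q_c)
    -- eigenstructure of the Sturm–Liouville operator A f = -(p f')' + q f
    (lam : ℕ → ℝ) (phi : ℕ → ℝ → ℝ)
    (hlampos : ∀ n ≥ 1, 0 < lam n)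
    (hlammono : ∀ n ≥ 1, lam n < lam (n+1))
    (hlamtop : Filter.Tendsto lam Filter.atTop Filter.atTop)
    (hphireg : ∀ n ≥ 1, ContDiffOn ℝ 2 (phi n) (Set.Icc 0 1))
    (hphieig : ∀ n ≥ 1, ∀ x ∈ Set.Icc (0:ℝ) 1,
      -(dI (fun y => p y * dI (phi n) y) x) + q x * phi n x = lam n * phi n x)
    (hphibc : ∀ n ≥ 1,
      Real.cos θ₁ * phi n 0 - Real.sin θ₁ * dI (phi n) 0 = 0 ∧
      Real.cos θ₂ * phi n 1 + Real.sin θ₂ * dI (phi n) 1 = 0)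
    (horth : ∀ m ≥ 1, ∀ n ≥ 1, ip (phi m) (phi n) = if m = n then 1 else 0)
    (hparseval : ∀ f : ℝ → ℝ, ContinuousOn f (Set.Icc 0 1) →
      (∫ x in (0:ℝ)..1, (f x)^2) = ∑' k : ℕ, (ip f (phi (k+1)))^2)
    -- additional trace assumptions: sup |φₙ(0)| < ∞ and Σ φₙ(0)²/λₙ < ∞
    (hphibdd : ∃ Cb : ℝ, ∀ n ≥ 1, |phi n 0| ≤ Cb)
    (hMsum : Summable fun k : ℕ => (phi (k+1) 0)^2 / lam (k+1))
    -- dimensions and gains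
    (N₀ : ℕ) (hN₀ : 1 ≤ N₀)
    (hspec : ∀ n ≥ N₀ + 1, -lam n + q_c + |c| < 0)
    (K L : Fin N₀ → ℝ)
    (F1m : Matrix (Fin N₀ ⊕ Fin N₀) (Fin N₀ ⊕ Fin N₀) ℝ)
    (hF1m : F1m = F1 N₀ lam q_c (B0 N₀ p qt θ₂ q_c lam phi)
      (fun i => phi (i.val + 1) 0) K L)
    (hF1spec : ∀ μ : ℂ, μ ∈ spectrum ℂ (F1m.map (Complex.ofReal : ℝ → ℂ)) → μ.re < -|c|)
    -- Young parameters
    (α₁ α₂ α₃ α₄ cf : ℝ) (hα₁ : 0 < α₁) (hα₂ : 0 < α₂) (hα₃ : 0 < α₃) (hα₄ : 0 < α₄)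
    (hcf : cf = 1 - (|c|/α₁ + 1/α₂ + 1/α₃ + |c|/α₄)/2) (hcfpos : 0 < cf) :
    ∃ N₁ : ℕ, N₀ + 1 ≤ N₁ ∧ ∀ N ≥ N₁,
      ∃ (P Q1 : Matrix (Fin N₀ ⊕ Fin N₀) (Fin N₀ ⊕ Fin N₀) ℝ)
        (Q2 : Matrix (Fin (N - N₀)) (Fin (N - N₀)) ℝ) (r₁ r₂ βs γ : ℝ),
        P.PosDef ∧ Q1.PosSemidef ∧ Q2.PosSemidef ∧
        0 < r₁ ∧ 0 < r₂ ∧ 0 < βs ∧ 0 < γ ∧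
        (-(PsiM N₀ N P Q1 F1m Q2 (A1 N₀ N lam q_c)
            (F2 N₀ N L
              (fun i => phi (N₀ + i.val + 1) 0 / Real.sqrt (lam (N₀ + i.val + 1))))
            (Lv N₀ L) (Kt N₀ K)
            (Erow N₀ N F1m
              (F2 N₀ N L
                (fun i => phi (N₀ + i.val + 1) 0 / Real.sqrt (lam (N₀ + i.val + 1))))
              (Lv N₀ L) (Kt N₀ K))
            c r₁ βs γ α₂ α₃ (RN2 (aFun p qt θ₂) phi N) (RN2 (bFun θ₂) phi N))).PosDef ∧
        (-(Theta1 N₀ P Q1 (Kt N₀ K) c γ α₃ α₄ (RN2 (bFun θ₂) phi N))).PosDef ∧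
        (-(Theta2 N₀ N Q2 r₁ c)).PosDef ∧
        γ * α₁ * |c| - r₂ < 0 ∧
        2*γ*(-cf * lam (N+1) + q_c)
            + βs * (∑' k : ℕ, (phi (N + 1 + k) 0)^2 / lam (N + 1 + k))
            + r₂ / lam (N+1) < 0 := by
  have hc' : 0 < |c| := abs_pos.mpr hc
  have : Nonempty (Fin N₀) := ⟨⟨0, hN₀⟩⟩
  obtain ⟨P, hP, δ₂, hδ₂, hlyap⟩ := exists_posDef_of_spectrum_re_lt F1m |c| hF1spec
  obtain ⟨δ, rfl⟩ : ∃ δ, δ₂ = 2 * δ := ⟨δ₂ / 2, by ring⟩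
  have hδ : 0 < δ := by linarith
  set k := Kt N₀ K
  set l := Lv N₀ L
  set A := RN2 (aFun p qt θ₂) phi 0
  set B := RN2 (bFun θ₂) phi 0
  have hA : 0 ≤ A := RN2_nonneg _ _ _
  have hB : 0 ≤ B := RN2_nonneg _ _ _
  set ψ : ℕ → ℝ := fun j => (phi (j + 1) 0) ^ 2 / lam (j + 1) with hψ
  have hψ₀ : ∀ j, 0 ≤ ψ j := fun j => div_nonneg (sq_nonneg _) (hlampos _ (by omega)).le
  set m := ∑' j, ψ j
  have hm : 0 ≤ m := tsum_nonneg hψ₀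
  have hκ := dotProduct_self_nonneg_real k
  have he₁ := dotProduct_self_nonneg_real (k ᵥ* F1m)
  have hPl := dotProduct_self_nonneg_real (P *ᵥ l)
  set η := lam (N₀ + 1) - q_c - |c| with hη_def
  have hη : 0 < η := by linarith [hspec (N₀ + 1) le_rfl]
  set t := ((P *ᵥ l) ⬝ᵥ (P *ᵥ l) + 1) / δ with ht_def
  have ht : 0 < t := by positivity
  have htδ : (P *ᵥ l) ⬝ᵥ (P *ᵥ l) ≤ t * δ := by
    rw [ht_def, div_mul_cancel₀ _ hδ.ne']
    linarith
  set g₁ := α₂ * A * (k ⬝ᵥ k)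
  set g₂ := 6 * α₃ * B * ((k ᵥ* F1m) ⬝ᵥ (k ᵥ* F1m))
  set g₃ := 6 * α₃ * B * ((k ⬝ᵥ l) ^ 2 * (m + 1))
  set g₄ := (2 * α₃ * |c| + α₄) * |c| * B * (k ⬝ᵥ k)
  have hg₁ : 0 ≤ g₁ := by positivity
  have hg₂ : 0 ≤ g₂ := by positivity
  have hg₃ : 0 ≤ g₃ := by positivity
  have hg₄ : 0 ≤ g₄ := by positivity
  obtain ⟨γ, hγ, hγg⟩ := exists_pos_mul_le (by positivity : 0 ≤ g₁ + g₂ + g₃ + g₄)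
    (by positivity : 0 < min (δ / 4) 1)
  have hγδ := hγg.trans (min_le_left _ _)
  have hγ1 := hγg.trans (min_le_right _ _)
  have hγ₁ := mul_nonneg hγ.le hg₁
  have hγ₂ := mul_nonneg hγ.le hg₂
  have hγ₃ := mul_nonneg hγ.le hg₃
  have hγ₄ := mul_nonneg hγ.le hg₄
  obtain ⟨N₁, hN₁⟩ := eventually_Theta4_neg hlamtop (βs := t + 2) (r₂ := 2 * γ * α₁ * |c|)
    hγ hcfpos (by positivity) q_c m
  have hlam_le : ∀ i, lam (N₀ + 1) ≤ lam (N₀ + i + 1) := fun i => by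
    induction i with
    | zero => exact le_rfl
    | succ i ih => exact ih.trans (hlammono _ (by omega)).le
  refine ⟨max (N₀ + 1) N₁, le_max_left _ _, fun N hN => ?_⟩
  have hΘ₄ := hN₁ N ((le_max_right _ _).trans hN)
  have haN₀ : 0 ≤ RN2 (aFun p qt θ₂) phi N := RN2_nonneg _ _ _
  have hbN₀ : 0 ≤ RN2 (bFun θ₂) phi N := RN2_nonneg _ _ _
  have haN : RN2 (aFun p qt θ₂) phi N ≤ A := RN2_le_RN2_zero _ _ _
  have hbN : RN2 (bFun θ₂) phi N ≤ B := RN2_le_RN2_zero _ _ _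
  generalize RN2 (aFun p qt θ₂) phi N = a at *
  generalize RN2 (bFun θ₂) phi N = b at *
  have hr₁ : 0 < (t * m + 3) / η := by positivity
  refine ⟨P, |c| • P + δ • 1, (((t * m + 3) / η) * |c| + 1) • 1, (t * m + 3) / η,
    2 * γ * α₁ * |c|, t + 2, γ, hP, (hP.posSemidef.smul hc'.le).add (PosSemidef.one.smul hδ.le),
    PosSemidef.one.smul (by positivity), hr₁, by positivity, by positivity, hγ, ?_, ?_, ?_, ?_, ?_⟩
  · refine posDef_neg_PsiM (m := m) (t := t) (η := η) hP hδ hlyap (fun i => ?_) hr₁ ?_ ht htδ ?_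
      le_rfl (by positivity) ?_ ?_ ?_ (by positivity)
    · linarith [hlam_le i]
    · refine le_trans (le_of_eq ?_) (sum_fin_shift_le_tsum hψ₀ hMsum N₀ (N - N₀))
      refine Finset.sum_congr rfl fun i _ => ?_
      simp only [hψ]
      rw [div_mul_div_comm, Real.mul_self_sqrt (hlampos _ (by omega)).le, sq]
    · rw [div_mul_cancel₀ _ hη.ne']
    · calc α₂ * γ * a * (k ⬝ᵥ k) ≤ α₂ * γ * A * (k ⬝ᵥ k) := by gcongr
        _ = γ * g₁ := by ring
        _ ≤ δ / 4 := by linarith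
    · calc 6 * α₃ * γ * b * ((k ᵥ* F1m) ⬝ᵥ (k ᵥ* F1m))
          ≤ 6 * α₃ * γ * B * ((k ᵥ* F1m) ⬝ᵥ (k ᵥ* F1m)) := by gcongr
        _ = γ * g₂ := by ring
        _ ≤ δ / 4 := by linarith
    · calc 6 * α₃ * γ * b * ((k ⬝ᵥ l) ^ 2 * (m + 1))
          ≤ 6 * α₃ * γ * B * ((k ⬝ᵥ l) ^ 2 * (m + 1)) := by gcongr
        _ = γ * g₃ := by ring
        _ ≤ 1 := by linarith
  · refine posDef_neg_Theta1 k hδ (by positivity) ?_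
    calc (2 * α₃ * |c| + α₄) * γ * |c| * b * (k ⬝ᵥ k)
        ≤ (2 * α₃ * |c| + α₄) * γ * |c| * B * (k ⬝ᵥ k) := by gcongr
      _ = γ * g₄ := by ring
      _ ≤ δ / 2 := by linarith
  · unfold Theta2
    rw [← sub_smul, sub_add_cancel_left, neg_smul, one_smul, neg_neg]
    exact PosDef.one
  · have : 0 < γ * α₁ * |c| := by positivity
    linarith
  · refine lt_of_le_of_lt ?_ hΘ₄
    have hS : ∑' j : ℕ, (phi (N + 1 + j) 0) ^ 2 / lam (N + 1 + j) ≤ m := by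
      refine le_trans (le_of_eq (tsum_congr fun j => ?_)) (tsum_shift_le hψ₀ hMsum N)
      simp only [hψ]
      rw [show N + 1 + j = j + N + 1 by ring]
    gcongr

end
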